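/- Let α be a partition with all parts at least 2 with overlapping partition p, let ν be a partition of |α|, and let T ∈ Tab(ν,α). (a) If φ_{R_α^p}(T) is an LR tableau (i.e. T is the companion tableau of an LR filling of R_α^p), then the descent set of T̂ has at least p_1 elements. (b) If T has no negligible critical numbers and its critical set is nonempty, then φ_{R_α^p}(T) is an LR tableau if and only if every critical number of T is p-ineffective. -/

import Mathlib

namespace RibbonSupport

/-- A partition: a weakly decreasing list of positive integers. -/
def IsPartition (a : List ℕ) : Prop := a.Pairwise (· ≥ ·) ∧ ∀ x ∈ a, 0 < x

/-- All parts of the list are at least `m`. -/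
def PartsGE (a : List ℕ) (m : ℕ) : Prop := ∀ x ∈ a, m ≤ x

/-- Dominance order `lam ⪯ mu` on partitions of the same size. -/
def DomLE (lam mu : List ℕ) : Prop :=
  lam.sum = mu.sum ∧ ∀ i, (lam.take i).sum ≤ (mu.take i).sum

/-- The number of nonzero parts. -/
def lenp (p : List ℕ) : ℕ := p.countP (fun x => decide (x ≠ 0))

/-- `p` is an overlapping partition for the monotone ribbon with row lengths `a`:
`p` has the same length as `a`, its last entry is `0`, and consecutive entries
decrease by `0` or `1`. -/
def IsOverlapSeq (a p : List ℕ) : Prop :=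
  p.length = a.length ∧ p.getD (a.length - 1) 0 = 0 ∧
    ∀ i, i + 1 < a.length →
      p.getD i 0 = p.getD (i + 1) 0 ∨ p.getD i 0 = p.getD (i + 1) 0 + 1

/-- Rows `i` and `i+1` (0-based, top to bottom) of `R_a^p` overlap
(share exactly one column) exactly when `p_i = p_{i+1} + 1`. -/
def ovOf (p : List ℕ) : ℕ → Bool := fun i => decide (p.getD i 0 = p.getD (i + 1) 0 + 1)

def rowOffset (a : List ℕ) (i : ℕ) : ℕ := (a.take i).sum

/-- `w` is the reading word (rows right-to-left, top to bottom) of a semistandard filling of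
the ribbon with row lengths `a` (top to bottom) in which consecutive rows `i`, `i+1` share
exactly one column when `ov i = true` and no column otherwise.  Semistandardness amounts to:
within each row block the word is weakly decreasing (rows weakly increase left to right), and
at each overlapping gap the word strictly increases (columns strictly increase downwards). -/
def IsRibbonWord (a : List ℕ) (ov : ℕ → Bool) (w : List ℕ) : Prop :=
  w.length = a.sum ∧
  (∀ i j, i < a.length → j + 1 < a.getD i 0 →
    w.getD (rowOffset a i + j + 1) 0 ≤ w.getD (rowOffset a i + j) 0) ∧
  (∀ i, i + 1 < a.length → ov i = true →
    w.getD (rowOffset a (i + 1) - 1) 0 < w.getD (rowOffset a (i + 1)) 0)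

/-- Yamanouchi (lattice) word: each prefix has at least as many letters `j` as `j+1`. -/
def IsYam (w : List ℕ) : Prop := ∀ k j, (w.take k).count (j + 2) ≤ (w.take k).count (j + 1)

/-- The word `w` has content `nu` (and only positive letters). -/
def HasContent (w : List ℕ) (nu : List ℕ) : Prop :=
  (∀ j, w.count (j + 1) = nu.getD j 0) ∧ w.count 0 = 0

/-- There is an LR filling of the ribbon `(a, ov)` with content `nu`. -/
def InSupportOv (a : List ℕ) (ov : ℕ → Bool) (nu : List ℕ) : Prop :=
  ∃ w : List ℕ, IsRibbonWord a ov w ∧ IsYam w ∧ HasContent w nu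

/-- `nu` is in the Schur support of the monotone ribbon `R_a^p`. -/
def InSupport (a p nu : List ℕ) : Prop := InSupportOv a (ovOf p) nu

/-- `nu` is in the Schur support of the connected ribbon `R_a`. -/
def InSupportConn (a nu : List ℕ) : Prop := InSupportOv a (fun _ => true) nu

/-- `nu` belongs to the Schur interval `[a, (|a| - p₁, p₁)]` in dominance order. -/
def InInterval (a p nu : List ℕ) : Prop :=
  DomLE a nu ∧ DomLE nu [a.sum - p.getD 0 0, p.getD 0 0]

/-- The Schur support of `R_a^p`, as a set of partitions. -/
def SupportSet (a p : List ℕ) : Set (List ℕ) := {nu | IsPartition nu ∧ InSupport a p nu}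

/-- The Schur interval of `R_a^p`, as a set of partitions. -/
def IntervalSet (a p : List ℕ) : Set (List ℕ) := {nu | IsPartition nu ∧ InInterval a p nu}

/-- `R_a^p` has full Schur support. -/
def FullSupport (a p : List ℕ) : Prop := SupportSet a p = IntervalSet a p

/-- The Schur support of the connected ribbon `R_a`, as a set of partitions. -/
def SupportSetConn (a : List ℕ) : Set (List ℕ) := {nu | IsPartition nu ∧ InSupportConn a nu}

/-- `ϱ_i` (1-based `i`): `Σ_{q=i+1}^{ℓ(a)} a_q − p_{i+1} + 1`. -/
def rho (a p : List ℕ) (i : ℕ) : ℕ := (a.drop i).sum + 1 - p.getD i 0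

/-- Entry `j` (1-based) of the `i`-witness vector: `[ϱ_i − a_j]₊`. -/
def wit (a p : List ℕ) (i j : ℕ) : ℕ := rho a p i - a.getD (j - 1) 0

/-- Size of the `i`-witness vector. -/
def witSize (a p : List ℕ) (i : ℕ) : ℕ := ∑ j ∈ Finset.Icc 1 i, wit a p i j

/-! ### Tableaux -/

/-- Cells (0-based `(row, column)`) of the Young diagram of `lam`. -/
def cells (lam : List ℕ) : Finset (ℕ × ℕ) :=
  (Finset.range lam.length ×ˢ Finset.range (lam.sum + 1)).filter
    (fun x => x.2 < lam.getD x.1 0)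

/-- `T` is a semistandard Young tableau of shape `lam` and content `al`
(normalized to vanish off the diagram). -/
def IsTab (lam al : List ℕ) (T : ℕ × ℕ → ℕ) : Prop :=
  (∀ x, x ∉ cells lam → T x = 0) ∧
  (∀ x ∈ cells lam, 1 ≤ T x) ∧
  (∀ i c, (i, c + 1) ∈ cells lam → T (i, c) ≤ T (i, c + 1)) ∧
  (∀ i c, (i + 1, c) ∈ cells lam → T (i, c) < T (i + 1, c)) ∧
  (∀ k, ((cells lam).filter (fun x => T x = k + 1)).card = al.getD k 0)

/-- Standardization of a tableau: entries are renumbered `1, …, N` in increasing order of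
value, entries of equal value being numbered from southwest to northeast (by column). -/
def stdz (lam : List ℕ) (T : ℕ × ℕ → ℕ) : ℕ × ℕ → ℕ := fun x =>
  if x ∈ cells lam then
    ((cells lam).filter (fun y => T y < T x ∨ (T y = T x ∧ y.2 < x.2))).card + 1
  else 0

/-- `n` is a descent of the standard tableau `U`: the entry `n+1` lies in a strictly
lower row than the entry `n`. -/
def IsDescent (lam : List ℕ) (U : ℕ × ℕ → ℕ) (n : ℕ) : Prop :=
  ∃ x ∈ cells lam, ∃ y ∈ cells lam, U x = n ∧ U y = n + 1 ∧ x.1 < y.1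

/-- `S(al)`: the set of proper partial sums of the composition `al`. -/
def Sset (al : List ℕ) : Set ℕ := {n | ∃ k, 0 < k ∧ k < al.length ∧ n = (al.take k).sum}

/-- `s ∈ D(T)`: some entry `s+1` of `T` lies in a strictly lower row than some entry `s`. -/
def TabDescent (lam : List ℕ) (T : ℕ × ℕ → ℕ) (s : ℕ) : Prop :=
  ∃ x ∈ cells lam, ∃ y ∈ cells lam, T x = s ∧ T y = s + 1 ∧ x.1 < y.1

/-- The word `w_{T̂}` of `T`: its `u`-th letter (1-based) is the 1-based row index of the
entry `u` of the standardization `T̂` of `T`. -/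
def wordOf (lam : List ℕ) (T : ℕ × ℕ → ℕ) : List ℕ :=
  (List.range lam.sum).map fun n =>
    ∑ x ∈ (cells lam).filter (fun x => stdz lam T x = n + 1), (x.1 + 1)

/-- `j ∈ {2, …, ℓ(al)}` is a critical number of `T ∈ Tab(lam, al)`:
`w_{α_1+⋯+α_{j-1}} = w_{α_1+⋯+α_{j-1}+1}` in the word of `T`. -/
def CriticalNum (lam al : List ℕ) (T : ℕ × ℕ → ℕ) (j : ℕ) : Prop :=
  2 ≤ j ∧ j ≤ al.length ∧
    (wordOf lam T).getD ((al.take (j - 1)).sum - 1) 0 =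
      (wordOf lam T).getD ((al.take (j - 1)).sum) 0

/-- `j ∈ {2, …, ℓ(al)}` is a negligible critical number of `T`:
`w_{α_1+⋯+α_{j-1}} > w_{α_1+⋯+α_{j-1}+1}` in the word of `T`. -/
def NegligibleNum (lam al : List ℕ) (T : ℕ × ℕ → ℕ) (j : ℕ) : Prop :=
  2 ≤ j ∧ j ≤ al.length ∧
    (wordOf lam T).getD ((al.take (j - 1)).sum) 0 <
      (wordOf lam T).getD ((al.take (j - 1)).sum - 1) 0

/-- The overlapping partition of the ribbon encoded by its gap pattern `b`
(`b j = true` iff rows `j` and `j+1`, 0-based, overlap). -/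
def povOf (b : List Bool) : List ℕ :=
  (List.range (b.length + 1)).map fun i => (b.drop i).count true

/-! ### Connected ribbons with rows in arbitrary order -/

/-- Starting column (0-based) of row `i` of the connected ribbon with row lengths `b`. -/
def startConn (b : List ℕ) (i : ℕ) : ℕ := (b.drop (i + 1)).sum + (i + 1) - b.length

/-- Number of columns of the connected ribbon with row lengths `b`. -/
def ncols (b : List ℕ) : ℕ := b.sum + 1 - b.length

/-- Length of column `c` of the connected ribbon with row lengths `b`. -/
def colLen (b : List ℕ) (c : ℕ) : ℕ :=
  ((Finset.range b.length).filter
    (fun i => startConn b i ≤ c ∧ c < startConn b i + b.getD i 0)).card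

/-- Deletion rank of row `j`: the number of rows deleted strictly before row `j` when one
repeatedly deletes a longest remaining row in highest (most northern) position. -/
def delRank (g : List ℕ) (j : ℕ) : ℕ :=
  ((Finset.range g.length).filter
    (fun j' => g.getD j 0 < g.getD j' 0 ∨ (g.getD j' 0 = g.getD j 0 ∧ j' < j))).card

/-- The overlapping partition of the connected ribbon with row lengths `g`:
its `(d+1)`-st entry is the number of length-two columns of the ribbon remaining
after deleting `d` rows as above, i.e. the number of adjacent pairs of surviving rows. -/
def ppiList (g : List ℕ) : List ℕ :=
  (List.range g.length).map fun d =>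
    ((Finset.range (g.length - 1)).filter
      (fun j => d ≤ delRank g j ∧ d ≤ delRank g (j + 1))).card


theorem mem_cells_iff (lam : List ℕ) (x : ℕ × ℕ) : x ∈ cells lam ↔ x.2 < lam.getD x.1 0 := by
  unfold cells
  simp only [Finset.mem_filter, Finset.mem_product, Finset.mem_range]
  refine ⟨fun h => h.2, fun h => ⟨⟨?_, ?_⟩, h⟩⟩
  · by_contra hc
    rw [List.getD_eq_default _ _ (by omega)] at h
    omega
  · have hl : x.1 < lam.length := by
      by_contra hc
      rw [List.getD_eq_default _ _ (by omega)] at h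
      omega
    rw [List.getD_eq_getElem _ _ hl] at h
    have := List.le_sum_of_mem (List.getElem_mem hl)
    omega

theorem sum_range_getD (l : List ℕ) (k : ℕ) :
    ∑ i ∈ Finset.range k, l.getD i 0 = (l.take k).sum := by
  induction k with
  | zero => simp
  | succ k ih =>
    rw [Finset.sum_range_succ, ih]
    by_cases hk : k < l.length
    · rw [List.getD_eq_getElem _ _ hk, ← List.sum_take_succ _ _ hk]
    · rw [List.getD_eq_default _ _ (by omega), List.take_of_length_le (by omega),
        List.take_of_length_le (by omega)]
      simp

theorem card_row (lam : List ℕ) (r : ℕ) :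
    ((cells lam).filter (fun x => x.1 = r)).card = lam.getD r 0 := by
  have : (cells lam).filter (fun x => x.1 = r) =
      (Finset.range (lam.getD r 0)).image (fun c => (r, c)) := by
    ext ⟨i, c⟩
    simp only [Finset.mem_filter, mem_cells_iff, Finset.mem_image, Finset.mem_range,
      Prod.mk.injEq]
    constructor
    · rintro ⟨h, rfl⟩
      exact ⟨c, h, rfl, rfl⟩
    · rintro ⟨d, h, rfl, rfl⟩
      exact ⟨h, rfl⟩
  rw [this, Finset.card_image_of_injective _ (fun x y h => (Prod.mk.inj h).2), Finset.card_range]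

theorem card_cells (lam : List ℕ) : (cells lam).card = lam.sum := by
  have h : ∀ x ∈ cells lam, x.1 ∈ Finset.range lam.length := by
    intro x hx
    unfold cells at hx
    simp only [Finset.mem_filter, Finset.mem_product] at hx
    exact hx.1.1
  rw [Finset.card_eq_sum_card_fiberwise h]
  simp only [card_row]
  rw [sum_range_getD, List.take_length]

theorem getD_anti {lam : List ℕ} (h : IsPartition lam) {i j : ℕ} (hij : i ≤ j) :
    lam.getD j 0 ≤ lam.getD i 0 := by
  by_cases hj : j < lam.length
  · rw [List.getD_eq_getElem _ _ hj, List.getD_eq_getElem _ _ (by omega : i < lam.length)]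
    rcases Nat.lt_or_ge i j with hlt | hge
    · exact (List.pairwise_iff_getElem.mp h.1) i j (by omega) hj hlt
    · have : i = j := by omega
      subst this; exact le_rfl
  · rw [List.getD_eq_default _ _ (by omega)]; omega

section
variable {nu a : List ℕ} {T : ℕ × ℕ → ℕ}

theorem cells_down (hnu : IsPartition nu) {i j c d : ℕ} (hij : i ≤ j) (hcd : c ≤ d)
    (h : (j, d) ∈ cells nu) : (i, c) ∈ cells nu := by
  rw [mem_cells_iff] at *
  have := getD_anti hnu hij
  simp only at *
  omega

theorem row_mono (hnu : IsPartition nu) (hT : IsTab nu a T) {i c d : ℕ} (hcd : c ≤ d)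
    (h : (i, d) ∈ cells nu) : T (i, c) ≤ T (i, d) := by
  induction d, hcd using Nat.le_induction with
  | base => exact le_rfl
  | succ d hd ih =>
    exact (ih (cells_down hnu le_rfl (Nat.le_succ d) h)).trans (hT.2.2.1 i d h)

theorem col_mono (hnu : IsPartition nu) (hT : IsTab nu a T) {i j c : ℕ} (hij : i < j)
    (h : (j, c) ∈ cells nu) : T (i, c) < T (j, c) := by
  induction j, hij using Nat.le_induction with
  | base => exact hT.2.2.2.1 i c h
  | succ j hj ih =>
    exact (ih (cells_down hnu (Nat.le_succ j) le_rfl h)).trans (hT.2.2.2.1 j c h)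

/-- the standardization order -/
def Prec (T : ℕ × ℕ → ℕ) (y x : ℕ × ℕ) : Prop := T y < T x ∨ (T y = T x ∧ y.2 < x.2)

theorem stdz_lt {x y : ℕ × ℕ} (hx : x ∈ cells nu) (hy : y ∈ cells nu) (h : Prec T y x) :
    stdz nu T y < stdz nu T x := by
  unfold stdz
  rw [if_pos hx, if_pos hy]
  apply Nat.succ_lt_succ
  apply Finset.card_lt_card
  unfold Prec at h
  rw [Finset.ssubset_iff_of_subset]
  · refine ⟨y, ?_, ?_⟩
    · simp only [Finset.mem_filter]; exact ⟨hy, h⟩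
    · simp only [Finset.mem_filter]; omega
  · intro z
    simp only [Finset.mem_filter]
    rintro ⟨hz, h'⟩
    exact ⟨hz, by omega⟩

theorem prec_total (hnu : IsPartition nu) (hT : IsTab nu a T) {x y : ℕ × ℕ}
    (hx : x ∈ cells nu) (hy : y ∈ cells nu) (hne : x ≠ y) : Prec T x y ∨ Prec T y x := by
  obtain ⟨i, c⟩ := x
  obtain ⟨j, d⟩ := y
  unfold Prec
  simp only
  by_contra hc
  have h1 : T (i, c) = T (j, d) := by omega
  have h2 : c = d := by omega
  subst h2
  rcases Nat.lt_trichotomy i j with h | h | h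
  · have := col_mono hnu hT h hy; omega
  · subst h; exact hne rfl
  · have := col_mono hnu hT h hx; omega

theorem stdz_inj (hnu : IsPartition nu) (hT : IsTab nu a T) {x y : ℕ × ℕ}
    (hx : x ∈ cells nu) (hy : y ∈ cells nu) (h : stdz nu T x = stdz nu T y) : x = y := by
  by_contra hne
  rcases prec_total hnu hT hx hy hne with h' | h'
  · have := stdz_lt hy hx h' |>.ne; omega
  · have := stdz_lt hx hy h' |>.ne; omega

theorem prec_of_stdz_lt (hnu : IsPartition nu) (hT : IsTab nu a T) {x y : ℕ × ℕ}
    (hx : x ∈ cells nu) (hy : y ∈ cells nu) (h : stdz nu T x < stdz nu T y) : Prec T x y := by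
  have hne : x ≠ y := by rintro rfl; omega
  rcases prec_total hnu hT hx hy hne with h' | h'
  · exact h'
  · have := stdz_lt hx hy h'; omega

theorem stdz_pos {x : ℕ × ℕ} (hx : x ∈ cells nu) : 1 ≤ stdz nu T x := by
  unfold stdz; rw [if_pos hx]; omega

theorem stdz_le {x : ℕ × ℕ} (hx : x ∈ cells nu) : stdz nu T x ≤ nu.sum := by
  unfold stdz; rw [if_pos hx, ← card_cells]
  apply Nat.succ_le_of_lt
  apply Finset.card_lt_card
  rw [Finset.ssubset_iff_of_subset (Finset.filter_subset _ _)]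
  exact ⟨x, hx, by simp⟩

theorem stdz_surj (hnu : IsPartition nu) (hT : IsTab nu a T) {n : ℕ} (hn : n < nu.sum) :
    ∃ x ∈ cells nu, stdz nu T x = n + 1 := by
  have himg : (cells nu).image (stdz nu T) = Finset.Icc 1 nu.sum := by
    apply Finset.eq_of_subset_of_card_le
    · intro m hm
      obtain ⟨x, hx, rfl⟩ := Finset.mem_image.mp hm
      exact Finset.mem_Icc.mpr ⟨stdz_pos hx, stdz_le hx⟩
    · rw [Finset.card_image_of_injOn (fun x hx y hy h => stdz_inj hnu hT hx hy h), card_cells]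
      simp
  have : n + 1 ∈ (cells nu).image (stdz nu T) := by
    rw [himg, Finset.mem_Icc]; omega
  simpa using this

/-- the letter function -/
def letter (lam : List ℕ) (T : ℕ × ℕ → ℕ) (n : ℕ) : ℕ :=
  ∑ x ∈ (cells lam).filter (fun x => stdz lam T x = n + 1), (x.1 + 1)

theorem letter_eq (hnu : IsPartition nu) (hT : IsTab nu a T) {n : ℕ} {x : ℕ × ℕ}
    (hx : x ∈ cells nu) (h : stdz nu T x = n + 1) : letter nu T n = x.1 + 1 := by
  unfold letter
  have : (cells nu).filter (fun x => stdz nu T x = n + 1) = {x} := by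
    ext y
    simp only [Finset.mem_filter, Finset.mem_singleton]
    constructor
    · rintro ⟨hy, h'⟩
      exact stdz_inj hnu hT hy hx (by omega)
    · rintro rfl
      exact ⟨hx, h⟩
  rw [this, Finset.sum_singleton]

theorem wordOf_eq : wordOf nu T = (List.range nu.sum).map (letter nu T) := rfl

theorem wordOf_getD {n : ℕ} (hn : n < nu.sum) : (wordOf nu T).getD n 0 = letter nu T n := by
  rw [wordOf_eq, List.getD_eq_getElem _ _ (by simpa using hn)]
  simp

theorem wordOf_take_count (hnu : IsPartition nu) (hT : IsTab nu a T) (k r : ℕ) :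
    ((wordOf nu T).take k).count (r + 1) =
      ((cells nu).filter (fun x => x.1 = r ∧ stdz nu T x ≤ k)).card := by
  have h1 : ((wordOf nu T).take k).count (r + 1) =
      ((Finset.range (min k nu.sum)).filter (fun n => letter nu T n = r + 1)).card := by
    rw [wordOf_eq, ← List.map_take, List.take_range, List.count, List.countP_map,
      List.countP_eq_length_filter, Finset.card_def]
    simp only [Finset.filter_val, Finset.range_val, Multiset.range, Multiset.filter_coe,
      Multiset.coe_card]
    congr 1
  rw [h1]
  symm
  apply Finset.card_bij (fun x _ => stdz nu T x - 1)
  · intro x hx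
    simp only [Finset.mem_filter, Finset.mem_range] at hx ⊢
    have h2 := stdz_pos (T := T) hx.1
    have h3 := stdz_le (T := T) hx.1
    refine ⟨by omega, ?_⟩
    rw [letter_eq hnu hT hx.1 (by omega), hx.2.1]
  · intro x hx y hy h
    simp only [Finset.mem_filter] at hx hy
    have h2 := stdz_pos (T := T) hx.1
    have h3 := stdz_pos (T := T) hy.1
    exact stdz_inj hnu hT hx.1 hy.1 (by omega)
  · intro n hn
    simp only [Finset.mem_filter, Finset.mem_range] at hn
    obtain ⟨x, hx, hxn⟩ := stdz_surj hnu hT (n := n) (by omega)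
    have := letter_eq hnu hT hx hxn
    refine ⟨x, ?_, by omega⟩
    simp only [Finset.mem_filter]
    exact ⟨hx, by omega, by omega⟩

theorem wordOf_isYam (hnu : IsPartition nu) (hT : IsTab nu a T) : IsYam (wordOf nu T) := by
  intro k j
  rw [wordOf_take_count hnu hT k (j + 1), wordOf_take_count hnu hT k j]
  apply Finset.card_le_card_of_injOn (fun x => (j, x.2))
  · rintro ⟨i, c⟩ hx
    simp only [Finset.coe_filter, Set.mem_ofPred_eq] at hx ⊢
    obtain ⟨hx, rfl, hk⟩ := hx
    have hx' := cells_down hnu (Nat.le_succ j) (le_refl c) hx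
    refine ⟨hx', trivial, ?_⟩
    have := stdz_lt (T := T) hx hx' (Or.inl (hT.2.2.2.1 j c hx))
    omega
  · rintro ⟨i, c⟩ hx ⟨i', c'⟩ hy h
    simp only [Finset.coe_filter, Set.mem_ofPred_eq] at hx hy
    simp only [Prod.mk.injEq, true_and] at h
    rw [hx.2.1, hy.2.1, h]

theorem wordOf_hasContent (hnu : IsPartition nu) (hT : IsTab nu a T) :
    HasContent (wordOf nu T) nu := by
  constructor
  · intro j
    have h := wordOf_take_count hnu hT nu.sum j
    rw [List.take_of_length_le (by simp [wordOf_eq])] at h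
    rw [h, ← card_row]
    congr 1
    apply Finset.filter_congr
    intro x hx
    have := stdz_le (T := T) hx
    tauto
  · rw [List.count_eq_zero, wordOf_eq]
    intro h
    obtain ⟨n, hn, h0⟩ := List.mem_map.mp h
    obtain ⟨x, hx, hxn⟩ := stdz_surj hnu hT (List.mem_range.mp hn)
    rw [letter_eq hnu hT hx hxn] at h0
    omega

theorem card_le_value (hT : IsTab nu a T) (k : ℕ) :
    ((cells nu).filter (fun x => T x ≤ k)).card = (a.take k).sum := by
  induction k with
  | zero =>
    rw [List.take_zero, List.sum_nil, Finset.card_eq_zero, Finset.filter_eq_empty_iff]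
    intro x hx
    have := hT.2.1 x hx
    omega
  | succ k ih =>
    rw [← sum_range_getD, Finset.sum_range_succ, sum_range_getD, ← ih, ← hT.2.2.2.2 k,
      ← Finset.card_union_of_disjoint]
    · congr 1
      ext x
      simp only [Finset.mem_filter, Finset.mem_union]
      have : T x ≤ k + 1 ↔ T x ≤ k ∨ T x = k + 1 := by omega
      tauto
    · rw [Finset.disjoint_filter]
      intro x _ h
      omega

theorem value_of_stdz (hT : IsTab nu a T) {i : ℕ} {x : ℕ × ℕ} (hx : x ∈ cells nu)
    (h1 : (a.take i).sum < stdz nu T x) (h2 : stdz nu T x ≤ (a.take (i + 1)).sum) :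
    T x = i + 1 := by
  have hs : stdz nu T x =
    ((cells nu).filter (fun y => T y < T x ∨ (T y = T x ∧ y.2 < x.2))).card + 1 := by
    unfold stdz; rw [if_pos hx]
  rcases Nat.lt_trichotomy (T x) (i + 1) with h | h | h
  · exfalso
    rw [← card_le_value hT] at h1
    have : ((cells nu).filter (fun y => T y < T x ∨ (T y = T x ∧ y.2 < x.2))).card <
        ((cells nu).filter (fun x => T x ≤ i)).card := by
      apply Finset.card_lt_card
      rw [Finset.ssubset_iff_of_subset]
      · refine ⟨x, ?_, ?_⟩
        · simp only [Finset.mem_filter]; exact ⟨hx, by omega⟩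
        · simp
      · intro z
        simp only [Finset.mem_filter]
        rintro ⟨hz, h'⟩
        exact ⟨hz, by omega⟩
    omega
  · exact h
  · exfalso
    rw [← card_le_value hT] at h2
    have : ((cells nu).filter (fun x => T x ≤ i + 1)).card ≤
        ((cells nu).filter (fun y => T y < T x ∨ (T y = T x ∧ y.2 < x.2))).card := by
      apply Finset.card_le_card
      intro z
      simp only [Finset.mem_filter]
      rintro ⟨hz, h'⟩
      exact ⟨hz, by omega⟩
    omega

theorem take_succ_sum (a : List ℕ) (i : ℕ) :
    (a.take (i + 1)).sum = (a.take i).sum + a.getD i 0 := by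
  rw [← sum_range_getD, ← sum_range_getD, Finset.sum_range_succ]

theorem take_sum_mono (a : List ℕ) {i j : ℕ} (h : i ≤ j) :
    (a.take i).sum ≤ (a.take j).sum := by
  rw [← sum_range_getD, ← sum_range_getD]
  exact Finset.sum_le_sum_of_subset (Finset.range_mono h)

theorem take_sum_le (a : List ℕ) (i : ℕ) : (a.take i).sum ≤ a.sum := by
  have := take_sum_mono a (i := i) (j := max i a.length) (le_max_left _ _)
  rwa [List.take_of_length_le (le_max_right i a.length)] at this

theorem wordOf_block (hnu : IsPartition nu) (hT : IsTab nu a T) (hsum : nu.sum = a.sum)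
    (i j : ℕ) (hj : j + 1 < a.getD i 0) :
    (wordOf nu T).getD (rowOffset a i + j + 1) 0 ≤ (wordOf nu T).getD (rowOffset a i + j) 0 := by
  unfold rowOffset
  have e := take_succ_sum a i
  have l := take_sum_le a (i + 1)
  rw [wordOf_getD (by omega), wordOf_getD (by omega)]
  obtain ⟨x, hx, hxn⟩ := stdz_surj hnu hT (n := (a.take i).sum + j) (by omega)
  obtain ⟨y, hy, hyn⟩ := stdz_surj hnu hT (n := (a.take i).sum + j + 1) (by omega)
  rw [letter_eq hnu hT hx hxn, letter_eq hnu hT hy hyn]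
  have vx := value_of_stdz hT (i := i) hx (by omega) (by omega)
  have vy := value_of_stdz hT (i := i) hy (by omega) (by omega)
  have hp := prec_of_stdz_lt hnu hT hx hy (by omega)
  unfold Prec at hp
  have hc : x.2 < y.2 := by omega
  by_contra hcon
  obtain ⟨xi, xc⟩ := x
  obtain ⟨yi, yc⟩ := y
  simp only at hc hcon
  have h1 := row_mono hnu hT hc.le (cells_down hnu (by omega : xi ≤ yi) le_rfl hy)
  have h2 := col_mono hnu hT (by omega : xi < yi) hy
  omega

theorem isDescent_of_lt (hnu : IsPartition nu) (hT : IsTab nu a T) {n : ℕ} (h0 : 0 < n)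
    (hn : n < nu.sum) (h : (wordOf nu T).getD (n - 1) 0 < (wordOf nu T).getD n 0) :
    IsDescent nu (stdz nu T) n := by
  rw [wordOf_getD (by omega), wordOf_getD hn] at h
  obtain ⟨x, hx, hxn⟩ := stdz_surj hnu hT (n := n - 1) (by omega)
  obtain ⟨y, hy, hyn⟩ := stdz_surj hnu hT hn
  rw [letter_eq hnu hT hx hxn, letter_eq hnu hT hy hyn] at h
  exact ⟨x, hx, y, hy, by omega, hyn, by omega⟩

theorem descents_finite : {n : ℕ | IsDescent nu (stdz nu T) n}.Finite := by
  apply (Set.finite_Iic nu.sum).subset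
  rintro n ⟨x, hx, _, _, rfl, _⟩
  exact stdz_le hx

theorem overlap_count {p : List ℕ} (hp : IsOverlapSeq a p) (k : ℕ) (hk : k < a.length) :
    p.getD 0 0 = p.getD k 0 + ((Finset.range k).filter (fun i => ovOf p i = true)).card := by
  induction k with
  | zero => simp
  | succ k ih =>
    rw [ih (by omega), Finset.range_add_one, Finset.filter_insert]
    rcases hp.2.2 k hk with h | h
    · rw [if_neg]
      · omega
      · simp only [ovOf, decide_eq_true_eq]; omega
    · rw [if_pos]
      · rw [Finset.card_insert_of_notMem (by simp)]; omega
      · simp only [ovOf, decide_eq_true_eq]; omega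

theorem take_sum_lt (h2 : PartsGE a 2) {i j : ℕ} (hij : i < j) (hj : i < a.length) :
    (a.take i).sum < (a.take j).sum := by
  have h := take_sum_mono a (i := i + 1) (j := j) hij
  rw [take_succ_sum, List.getD_eq_getElem _ _ hj] at h
  have := h2 _ (List.getElem_mem hj)
  omega

theorem part_a {p : List ℕ} (h2 : PartsGE a 2) (hp : IsOverlapSeq a p) (hnu : IsPartition nu)
    (hsum : nu.sum = a.sum) (hT : IsTab nu a T)
    (hw : IsRibbonWord a (ovOf p) (wordOf nu T)) :
    p.getD 0 0 ≤ Nat.card {n : ℕ // IsDescent nu (stdz nu T) n} := by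
  rcases Nat.eq_zero_or_pos a.length with h0 | h0
  · rw [List.getD_eq_default _ _ (by rw [hp.1]; omega)]; omega
  · have hc := overlap_count hp (a.length - 1) (by omega)
    rw [hp.2.1, Nat.zero_add] at hc
    rw [hc]
    have hinj : Set.InjOn (fun i => rowOffset a (i + 1))
        ((Finset.range (a.length - 1)).filter (fun i => ovOf p i = true) : Finset ℕ) := by
      intro i hi j hj h
      simp only [Finset.coe_filter, Finset.mem_range, Set.mem_ofPred_eq, rowOffset] at hi hj h
      rcases Nat.lt_trichotomy i j with hl | hl | hl
      · have := take_sum_lt h2 (by omega : i + 1 < j + 1) (by omega); omega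
      · exact hl
      · have := take_sum_lt h2 (by omega : j + 1 < i + 1) (by omega); omega
    rw [← Finset.card_image_of_injOn hinj]
    have hf := descents_finite (nu := nu) (T := T)
    change _ ≤ Nat.card ({n : ℕ | IsDescent nu (stdz nu T) n} : Set ℕ)
    rw [Nat.card_coe_set_eq, ← Set.ncard_coe_finset]
    apply Set.ncard_le_ncard _ hf
    intro n hn
    simp only [Finset.coe_image, Set.mem_image, Finset.coe_filter, Finset.mem_range,
      Set.mem_ofPred_eq] at hn ⊢
    obtain ⟨i, ⟨hi, ho⟩, rfl⟩ := hn
    have h3 := hw.2.2 i (by omega) ho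
    have h4 := take_sum_lt h2 (by omega : 0 < i + 1) h0
    have h5 := take_sum_lt h2 (by omega : i + 1 < i + 2) (by omega)
    have h6 := take_sum_le a (i + 2)
    exact isDescent_of_lt hnu hT (by unfold rowOffset; omega) (by unfold rowOffset; omega) h3

end

/-- Theorem `corl2`: let `a` be a partition with parts ≥ 2 with overlapping
partition `p`, `nu` a partition of `|a|`, and `T ∈ Tab(nu, a)`.
(a) If `φ_{R_a^p}(T)` is an LR tableau then the descent set of `T̂` has at least `p₁` elements.
(b) If `T` has no negligible critical numbers and its critical set is nonempty, then
`φ_{R_a^p}(T)` is an LR tableau iff every critical number `j` of `T` is `p`-ineffective,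
i.e. rows `j−1` and `j` of `R_a^p` do not overlap. -/
theorem companion_tableau_criterion
    (a p nu : List ℕ) (ha : IsPartition a) (h2 : PartsGE a 2)
    (hp : IsOverlapSeq a p) (hnu : IsPartition nu) (hsum : nu.sum = a.sum)
    (T : ℕ × ℕ → ℕ) (hT : IsTab nu a T) :
    ((IsRibbonWord a (ovOf p) (wordOf nu T) ∧ IsYam (wordOf nu T) ∧
        HasContent (wordOf nu T) nu) →
      p.getD 0 0 ≤ Nat.card {n : ℕ // IsDescent nu (stdz nu T) n}) ∧
    ((∀ j, ¬ NegligibleNum nu a T j) → (∃ j, CriticalNum nu a T j) →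
      ((IsRibbonWord a (ovOf p) (wordOf nu T) ∧ IsYam (wordOf nu T) ∧
          HasContent (wordOf nu T) nu) ↔
        ∀ j, CriticalNum nu a T j → ovOf p (j - 2) = false)) := by
  refine ⟨fun h => part_a h2 hp hnu hsum hT h.1, fun hneg _ => ⟨?_, ?_⟩⟩
  · rintro ⟨hw, _, _⟩ j ⟨hj2, hjl, hj⟩
    by_contra hc
    have h3 := hw.2.2 (j - 2) (by omega) (by simpa using hc)
    have e : j - 2 + 1 = j - 1 := by omega
    rw [e] at h3
    unfold rowOffset at h3
    omega
  · intro hcrit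
    refine ⟨⟨by rw [wordOf_eq]; simp [hsum], fun i j _ hj => wordOf_block hnu hT hsum i j hj, ?_⟩,
      wordOf_isYam hnu hT, wordOf_hasContent hnu hT⟩
    intro i hi ho
    unfold rowOffset
    by_contra hcon
    rcases Nat.lt_or_eq_of_le (Nat.le_of_not_lt hcon) with h | h
    · exact hneg (i + 2) ⟨by omega, by omega, h⟩
    · have := hcrit (i + 2) ⟨by omega, by omega, h.symm⟩
      rw [Nat.add_sub_cancel] at this
      rw [this] at ho
      exact absurd ho (by simp)

end RibbonSupport
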